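/- (Monotonicity of the policy iteration.) Let b ∈ ℝ^{N+1} and let σ', σ be vectors with entries in {σ̲, σ̄}. Suppose u, w ∈ ℝ^{N+1} satisfy (I − ΔtA(σ'))u = b and (I − ΔtA(σ))w = b (with identity boundary rows, so u_0 = w_0 = b_0 and u_N = w_N = b_N), and suppose that for every interior i the entry σ_i attains the maximum of τ ↦ α_i(τ)u_{i−1} + β_i(τ)u_{i+1} − (α_i(τ)+β_i(τ)+r)u_i over τ ∈ {σ̲, σ̄} (i.e. σ ∈ argsup_{τ} (A(τ)u)_i). Then w_i ≥ u_i for every index 0 ≤ i ≤ N; that is, the iterates of the policy iteration form a nondecreasing sequence. -/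

import Mathlib

/-! The matrix `I - Δt A(σ)` has nonpositive off-diagonal entries and interior row sums
`1 + Δt r > 0`, so at an interior node where a grid function `d` attains a negative minimum, the
corresponding row sends `d` to something negative. With nonnegative boundary values,
`(I - Δt A(σ)) d ≥ 0` therefore forces `d ≥ 0`. The choice `d = w - u` qualifies because replacing
`σ'` by the better policy `σ` only decreases `(I - Δt A(σ')) u`. -/

/-- `α_i(σ) = σ²x_i²/((x_i − x_{i−1})(x_{i+1} − x_{i−1}))`. -/
noncomputable def alphaC (x : ℕ → ℝ) (s : ℝ) (i : ℕ) : ℝ :=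
  s ^ 2 * (x i) ^ 2 / ((x i - x (i - 1)) * (x (i + 1) - x (i - 1)))

/-- `β_i(σ) = σ²x_i²/((x_{i+1} − x_i)(x_{i+1} − x_{i−1}))`. -/
noncomputable def betaC (x : ℕ → ℝ) (s : ℝ) (i : ℕ) : ℝ :=
  s ^ 2 * (x i) ^ 2 / ((x (i + 1) - x i) * (x (i + 1) - x (i - 1)))

/-- The `i`-th component of `A(τ)u`:
`(A(τ)u)_i = α_i(τ)u_{i−1} + β_i(τ)u_{i+1} − (α_i(τ)+β_i(τ)+r)u_i`. -/
noncomputable def Fnode (x : ℕ → ℝ) (s r : ℝ) (i : ℕ) (u : ℕ → ℝ) : ℝ :=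
  alphaC x s i * u (i - 1) + betaC x s i * u (i + 1)
    - (alphaC x s i + betaC x s i + r) * u i

theorem nonneg_of_tridiagonal_of_boundary_nonneg {R : Type*} [Ring R] [LinearOrder R]
    [IsStrictOrderedRing R] {N : ℕ} {a b c d : ℕ → R}
    (ha : ∀ i, 0 < i → i < N → 0 ≤ a i) (hb : ∀ i, 0 < i → i < N → 0 ≤ b i)
    (hc : ∀ i, 0 < i → i < N → a i + b i < c i) (hd0 : 0 ≤ d 0) (hdN : 0 ≤ d N)
    (hd : ∀ i, 0 < i → i < N → a i * d (i - 1) + b i * d (i + 1) ≤ c i * d i) :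
    ∀ i ≤ N, 0 ≤ d i := by
  obtain ⟨j, hjN, hmin⟩ := Set.exists_min_image (Set.Iic N) d (Set.finite_Iic N) Set.nonempty_Iic
  suffices 0 ≤ d j from fun i hi ↦ this.trans (hmin i hi)
  by_contra! hneg
  have hj_pos : 0 < j := Nat.pos_of_ne_zero fun h ↦ hneg.not_ge (h ▸ hd0)
  have hj_lt : j < N := lt_of_le_of_ne hjN fun h ↦ hneg.not_ge (h ▸ hdN)
  have hleft : d j ≤ d (j - 1) := hmin _ ((Nat.sub_le j 1).trans hjN)
  have hright : d j ≤ d (j + 1) := hmin _ hj_lt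
  have : c j * d j < c j * d j := calc
    c j * d j < (a j + b j) * d j := mul_lt_mul_of_neg_right (hc j hj_pos hj_lt) hneg
    _ = a j * d j + b j * d j := add_mul _ _ _
    _ ≤ a j * d (j - 1) + b j * d (j + 1) :=
      add_le_add (mul_le_mul_of_nonneg_left hleft (ha j hj_pos hj_lt))
        (mul_le_mul_of_nonneg_left hright (hb j hj_pos hj_lt))
    _ ≤ c j * d j := hd j hj_pos hj_lt
  exact this.false

section Coefficients

variable {x : ℕ → ℝ} {i : ℕ} (s : ℝ)

theorem alphaC_nonneg (hleft : x (i - 1) ≤ x i) (hright : x i ≤ x (i + 1)) : 0 ≤ alphaC x s i :=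
  div_nonneg (by positivity) (mul_nonneg (sub_nonneg.2 hleft) (sub_nonneg.2 (hleft.trans hright)))

theorem betaC_nonneg (hleft : x (i - 1) ≤ x i) (hright : x i ≤ x (i + 1)) : 0 ≤ betaC x s i :=
  div_nonneg (by positivity) (mul_nonneg (sub_nonneg.2 hright) (sub_nonneg.2 (hleft.trans hright)))

end Coefficients

theorem Fnode_sub (x : ℕ → ℝ) (s r : ℝ) (i : ℕ) (u w : ℕ → ℝ) :
    Fnode x s r i (w - u) = Fnode x s r i w - Fnode x s r i u := by
  simp only [Fnode, Pi.sub_apply]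
  ring

section Monotonicity

variable {N : ℕ} {x σ u w : ℕ → ℝ} {r Δt : ℝ}

theorem nonneg_of_implicit_step_nonneg (hx : ∀ i < N, x i < x (i + 1)) (hΔt : 0 ≤ Δt)
    (hr : -1 < Δt * r) {d : ℕ → ℝ} (hd0 : 0 ≤ d 0) (hdN : 0 ≤ d N)
    (hd : ∀ i, 0 < i → i < N → 0 ≤ d i - Δt * Fnode x (σ i) r i d) :
    ∀ i ≤ N, 0 ≤ d i := by
  have hleft : ∀ i, 0 < i → i < N → x (i - 1) ≤ x i := fun i hi hiN ↦ by
    simpa only [Nat.sub_add_cancel hi] using (hx (i - 1) (by lia)).le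
  have hright : ∀ i < N, x i ≤ x (i + 1) := fun i hiN ↦ (hx i hiN).le
  refine nonneg_of_tridiagonal_of_boundary_nonneg
    (a := fun i ↦ Δt * alphaC x (σ i) i) (b := fun i ↦ Δt * betaC x (σ i) i)
    (c := fun i ↦ 1 + Δt * (alphaC x (σ i) i + betaC x (σ i) i + r)) ?_ ?_ ?_ hd0 hdN ?_
  · exact fun i hi hiN ↦ mul_nonneg hΔt (alphaC_nonneg _ (hleft i hi hiN) (hright i hiN))
  · exact fun i hi hiN ↦ mul_nonneg hΔt (betaC_nonneg _ (hleft i hi hiN) (hright i hiN))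
  · intro i _ _
    linarith
  · intro i hi hiN
    have hrow := hd i hi hiN
    simp only [Fnode] at hrow
    linarith

theorem policy_iteration_monotone_general {σp : ℕ → ℝ}
    (hx : ∀ i < N, x i < x (i + 1)) (hΔt : 0 ≤ Δt) (hr : -1 < Δt * r)
    (h0 : u 0 ≤ w 0) (hN : u N ≤ w N)
    (hstep : ∀ i, 1 ≤ i → i ≤ N - 1 →
      u i - Δt * Fnode x (σp i) r i u ≤ w i - Δt * Fnode x (σ i) r i w)
    (himprove : ∀ i, 1 ≤ i → i ≤ N - 1 → Fnode x (σp i) r i u ≤ Fnode x (σ i) r i u) :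
    ∀ i ≤ N, u i ≤ w i := by
  suffices ∀ i ≤ N, 0 ≤ (w - u) i from fun i hi ↦ sub_nonneg.1 (this i hi)
  refine nonneg_of_implicit_step_nonneg (σ := σ) hx hΔt hr (sub_nonneg.2 h0) (sub_nonneg.2 hN) ?_
  intro i hi hi_lt
  have hiN : i ≤ N - 1 := Nat.le_sub_one_of_lt hi_lt
  have hsub : u i - Δt * Fnode x (σ i) r i u ≤ w i - Δt * Fnode x (σ i) r i w := calc
    u i - Δt * Fnode x (σ i) r i u ≤ u i - Δt * Fnode x (σp i) r i u :=
      sub_le_sub_left (mul_le_mul_of_nonneg_left (himprove i hi hiN) hΔt) _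
    _ ≤ w i - Δt * Fnode x (σ i) r i w := hstep i hi hiN
  rw [Fnode_sub, Pi.sub_apply]
  linarith

end Monotonicity

/-- Monotonicity of the policy iteration: if `(I − ΔtA(σ'))u = b`, `(I − ΔtA(σ))w = b`
(with identity boundary rows) and `σ` attains the argsup of `τ ↦ (A(τ)u)_i` over
`τ ∈ {σ̲, σ̄}` at every interior node, then `w ≥ u` componentwise. -/
theorem policy_iteration_monotone
    (N : ℕ) (hN : 2 ≤ N) (x : ℕ → ℝ) (hx0 : x 0 = 0)
    (hxmono : ∀ i < N, x i < x (i + 1))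
    (σlo σhi r Δt : ℝ) (hσlo : 0 ≤ σlo) (hσ : σlo < σhi) (hr : 0 ≤ r) (hΔt : 0 < Δt)
    (σp σ : ℕ → ℝ)
    (hσp : ∀ i, 1 ≤ i → i ≤ N - 1 → σp i ∈ ({σlo, σhi} : Set ℝ))
    (hσm : ∀ i, 1 ≤ i → i ≤ N - 1 → σ i ∈ ({σlo, σhi} : Set ℝ))
    (u w b : ℕ → ℝ)
    (hu0 : u 0 = b 0) (huN : u N = b N) (hw0 : w 0 = b 0) (hwN : w N = b N)
    (hu : ∀ i, 1 ≤ i → i ≤ N - 1 → u i - Δt * Fnode x (σp i) r i u = b i)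
    (hw : ∀ i, 1 ≤ i → i ≤ N - 1 → w i - Δt * Fnode x (σ i) r i w = b i)
    (hargmax : ∀ i, 1 ≤ i → i ≤ N - 1 → ∀ τ ∈ ({σlo, σhi} : Set ℝ),
      Fnode x τ r i u ≤ Fnode x (σ i) r i u) :
    ∀ i ≤ N, u i ≤ w i := by
  exact policy_iteration_monotone_general hxmono hΔt.le
    (neg_one_lt_zero.trans_le (mul_nonneg hΔt.le hr)) (hu0.trans hw0.symm).le
    (huN.trans hwN.symm).le (fun i hi hiN ↦ ((hu i hi hiN).trans (hw i hi hiN).symm).le)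
    fun i hi hiN ↦ hargmax i hi hiN _ (hσp i hi hiN)
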